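/- arXiv:2011.04551 — 3 statements merged into one kernel-verified Lean document; each statement's English description precedes it below -/
import Mathlib

section
/- For all natural numbers L ≤ R, the maximal aligned dyadic intervals contained in [L,R) are pairwise disjoint and their union equals [L,R). (In particular, the compact range of [L,R) is a partition of [L,R); it is empty when L = R.) -/
/-- An aligned dyadic interval of naturals: `[a·2^k, (a+1)·2^k)`. -/
def IsDyadic (I : Set ℕ) : Prop :=
  ∃ a k : ℕ, I = Set.Ico (a * 2 ^ k) ((a + 1) * 2 ^ k)

/-- The compact range of `[L, R)`: the set of maximal aligned dyadic intervals
contained in `[L, R)`. -/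
def CompactRange (L R : ℕ) : Set (Set ℕ) :=
  {I | IsDyadic I ∧ I ⊆ Set.Ico L R ∧
    ∀ J : Set ℕ, IsDyadic J → J ⊆ Set.Ico L R → I ⊆ J → I = J}

/-!
An aligned interval of length `2 ^ k` is a fibre of `n ↦ n / 2 ^ k`, and for `k ≤ l` the map
`n ↦ n / 2 ^ l` factors through `n ↦ n / 2 ^ k`. Hence two dyadic intervals that meet are nested,
so distinct maximal ones are disjoint. Every `n ∈ [L, R)` lies in the dyadic interval `{n}`, which
extends to a maximal one because `[L, R)` has only finitely many subsets.
-/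

theorem pairwise_disjoint_ofPred_maximal {α : Type*} [PartialOrder α] [OrderBot α] {P : α → Prop}
    (hP : ∀ ⦃x y⦄, P x → P y → ¬Disjoint x y → x ≤ y ∨ y ≤ x) :
    {x | Maximal P x}.Pairwise Disjoint := by
  intro x hx y hy hne
  by_contra hxy
  rcases hP hx.prop hy.prop hxy with hle | hle
  · exact hne (hx.eq_of_le hy.prop hle)
  · exact hne (hy.eq_of_le hx.prop hle).symm

theorem sUnion_ofPred_maximal {α : Type*} {P : Set α → Prop} (hP : {s | P s}.Finite) :
    ⋃₀ {s | Maximal P s} = ⋃₀ {s | P s} := by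
  refine (Set.sUnion_mono fun s hs => hs.prop).antisymm (Set.sUnion_subset fun s hs => ?_)
  obtain ⟨t, hst, ht⟩ := hP.exists_le_maximal hs
  exact hst.trans (Set.subset_sUnion_of_mem ht)

theorem Ico_mul_eq_preimage_div {m : ℕ} (hm : 0 < m) (a : ℕ) :
    Set.Ico (a * m) ((a + 1) * m) = (· / m) ⁻¹' {a} := by
  ext n
  rw [Set.mem_Ico, Set.mem_preimage, Set.mem_singleton_iff, Nat.div_eq_iff hm, add_one_mul]
  omega

theorem Ico_mul_subset_Ico_mul_of_dvd {m n : ℕ} (hmn : m ∣ n) {a b : ℕ}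
    (h : ¬Disjoint (Set.Ico (a * m) ((a + 1) * m)) (Set.Ico (b * n) ((b + 1) * n))) :
    Set.Ico (a * m) ((a + 1) * m) ⊆ Set.Ico (b * n) ((b + 1) * n) := by
  obtain ⟨x, hxa, hxb⟩ := Set.not_disjoint_iff.mp h
  have hn : 0 < n := Nat.pos_of_ne_zero (by rintro rfl; simp at hxb)
  obtain ⟨d, rfl⟩ := hmn
  rw [Ico_mul_eq_preimage_div (Nat.pos_of_mul_pos_right hn)] at hxa ⊢
  rw [Ico_mul_eq_preimage_div hn] at hxb ⊢
  intro y hy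
  calc y / (m * d) = y / m / d := (Nat.div_div_eq_div_mul ..).symm
    _ = x / m / d := congrArg (· / d) (hy.trans hxa.symm)
    _ = x / (m * d) := Nat.div_div_eq_div_mul ..
    _ = b := hxb

theorem isDyadic_singleton (n : ℕ) : IsDyadic {n} :=
  ⟨n, 0, by simp [Set.Ico_add_one_right_eq_Icc]⟩

theorem IsDyadic.subset_or_subset_of_not_disjoint {I J : Set ℕ} (hI : IsDyadic I) (hJ : IsDyadic J)
    (hIJ : ¬Disjoint I J) : I ⊆ J ∨ J ⊆ I := by
  obtain ⟨a, k, rfl⟩ := hI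
  obtain ⟨b, l, rfl⟩ := hJ
  rcases le_total k l with hkl | hlk
  · exact .inl (Ico_mul_subset_Ico_mul_of_dvd (pow_dvd_pow 2 hkl) hIJ)
  · exact .inr (Ico_mul_subset_Ico_mul_of_dvd (pow_dvd_pow 2 hlk) fun h => hIJ h.symm)

theorem sUnion_ofPred_isDyadic_subset (s : Set ℕ) : ⋃₀ {I | IsDyadic I ∧ I ⊆ s} = s :=
  (Set.sUnion_subset fun _ hI => hI.2).antisymm fun n hn =>
    ⟨{n}, ⟨isDyadic_singleton n, Set.singleton_subset_iff.mpr hn⟩, rfl⟩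

theorem compactRange_eq_ofPred_maximal (L R : ℕ) :
    CompactRange L R = {I | Maximal (fun J => IsDyadic J ∧ J ⊆ Set.Ico L R) I} := by
  ext I
  simp only [CompactRange, Set.mem_ofPred_eq, maximal_iff, and_imp, and_assoc]

theorem compactRange_pairwise_disjoint_sUnion (L R : ℕ) (h : L ≤ R) :
    (CompactRange L R).Pairwise Disjoint ∧ ⋃₀ CompactRange L R = Set.Ico L R := by
  have hfin : {I | IsDyadic I ∧ I ⊆ Set.Ico L R}.Finite :=
    (Set.finite_Ico L R).finite_subsets.subset fun _ hI => hI.2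
  rw [compactRange_eq_ofPred_maximal]
  constructor
  · exact pairwise_disjoint_ofPred_maximal fun _ _ hI hJ =>
      hI.1.subset_or_subset_of_not_disjoint hJ.1
  · rw [sUnion_ofPred_maximal hfin, sUnion_ofPred_isDyadic_subset]
end

section
/- For all natural numbers L ≤ R and every k ∈ ℕ, at most two of the maximal aligned dyadic intervals contained in [L,R) have length 2^k (one whose parent dyadic interval extends past L on the left, and one whose parent extends past R on the right). -/
/-!
The parent of a maximal interval in `[L, R)` is not contained in `[L, R)`. If it starts before `L`,
then the interval is the right half of its parent and the left half starts before `L`, so it is the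
first aligned interval of its length to start at or after `L`. Symmetrically, if the parent ends
after `R`, then the interval is the last aligned one of its length to end at or before `R`.
-/

/-- The `a`-th aligned dyadic interval of length `2 ^ k`. Its parent, the aligned interval of twice
the length containing it, is `dyadicIco (k + 1) (a / 2)`. -/
def dyadicIco (k a : ℕ) : Set ℕ :=
  Set.Ico (a * 2 ^ k) ((a + 1) * 2 ^ k)

section

variable {L R k a : ℕ}

theorem isDyadic_dyadicIco (k a : ℕ) : IsDyadic (dyadicIco k a) :=
  ⟨a, k, rfl⟩

theorem dyadicIco_subset_Ico_iff :
    dyadicIco k a ⊆ Set.Ico L R ↔ L ≤ a * 2 ^ k ∧ (a + 1) * 2 ^ k ≤ R :=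
  Set.Ico_subset_Ico_iff (Nat.mul_lt_mul_of_pos_right a.lt_succ_self (Nat.two_pow_pos k))

theorem dyadicIco_succ (k a : ℕ) :
    dyadicIco (k + 1) a = Set.Ico (2 * a * 2 ^ k) ((2 * a + 2) * 2 ^ k) := by
  unfold dyadicIco
  congr 1 <;> ring

theorem dyadicIco_succ_subset_Ico_iff :
    dyadicIco (k + 1) a ⊆ Set.Ico L R ↔ L ≤ 2 * a * 2 ^ k ∧ (2 * a + 2) * 2 ^ k ≤ R := by
  rw [dyadicIco_succ]
  exact Set.Ico_subset_Ico_iff (Nat.mul_lt_mul_of_pos_right (by omega) (Nat.two_pow_pos k))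

theorem dyadicIco_ssubset_parent (k a : ℕ) : dyadicIco k a ⊂ dyadicIco (k + 1) (a / 2) := by
  refine ⟨?_, fun h => ?_⟩
  · rw [dyadicIco_succ, dyadicIco_subset_Ico_iff]
    exact ⟨Nat.mul_le_mul_right _ (by omega), Nat.mul_le_mul_right _ (by omega)⟩
  · obtain ⟨hleft, hright⟩ := dyadicIco_succ_subset_Ico_iff.1 h
    have ha_even : a ≤ 2 * (a / 2) := Nat.le_of_mul_le_mul_right hleft (Nat.two_pow_pos k)
    have ha_odd : 2 * (a / 2) + 2 ≤ a + 1 := Nat.le_of_mul_le_mul_right hright (Nat.two_pow_pos k)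
    omega

theorem not_subset_Ico_of_mem_compactRange_of_ssubset {I J : Set ℕ} (hI : I ∈ CompactRange L R)
    (hJ : IsDyadic J) (hIJ : I ⊂ J) : ¬J ⊆ Set.Ico L R :=
  fun hJLR => hIJ.ne (hI.2.2 J hJ hJLR hIJ.subset)

theorem eq_ceilDiv_of_parent_lt {m : ℕ} (hL : L ≤ a * m) (hparent : 2 * (a / 2) * m < L) :
    a = L ⌈/⌉ m := by
  have hm : 0 < m := Nat.pos_of_ne_zero (by rintro rfl; omega)
  have hodd : 2 * (a / 2) < a := Nat.lt_of_mul_lt_mul_right (hparent.trans_le hL)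
  have hlt : 2 * (a / 2) < L ⌈/⌉ m := by
    rwa [← not_le, ceilDiv_le_iff_le_mul hm, not_le, mul_comm]
  have hle : L ⌈/⌉ m ≤ a := (ceilDiv_le_iff_le_mul hm).2 (mul_comm a m ▸ hL)
  omega

theorem succ_eq_div_of_lt_parent {m : ℕ} (hR : (a + 1) * m ≤ R)
    (hparent : R < (2 * (a / 2) + 2) * m) : a + 1 = R / m := by
  have heven : a + 1 < 2 * (a / 2) + 2 := Nat.lt_of_mul_lt_mul_right (hR.trans_lt hparent)
  exact (Nat.div_eq_of_lt_le hR (hparent.trans_le (Nat.mul_le_mul_right m (by omega)))).symm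

theorem eq_ceilDiv_or_succ_eq_div_of_mem_compactRange (h : dyadicIco k a ∈ CompactRange L R) :
    a = L ⌈/⌉ 2 ^ k ∨ a + 1 = R / 2 ^ k := by
  obtain ⟨hL, hR⟩ := dyadicIco_subset_Ico_iff.1 h.2.1
  have hparent := not_subset_Ico_of_mem_compactRange_of_ssubset h
    (isDyadic_dyadicIco (k + 1) (a / 2)) (dyadicIco_ssubset_parent k a)
  rw [dyadicIco_succ_subset_Ico_iff, not_and_or, not_le, not_le] at hparent
  exact hparent.imp (eq_ceilDiv_of_parent_lt hL) (succ_eq_div_of_lt_parent hR)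

end

/-- At most two of the maximal aligned dyadic intervals in `[L, R)` have length `2^k`. -/
theorem compactRange_at_most_two_per_height (L R : ℕ) (h : L ≤ R) (k : ℕ) :
    {I ∈ CompactRange L R | ∃ a : ℕ, I = Set.Ico (a * 2 ^ k) ((a + 1) * 2 ^ k)}.encard ≤ 2 := by
  have hsub : {I ∈ CompactRange L R | ∃ a : ℕ, I = dyadicIco k a} ⊆
      {dyadicIco k (L ⌈/⌉ 2 ^ k), dyadicIco k (R / 2 ^ k - 1)} := by
    rintro _ ⟨hmax, a, rfl⟩
    rcases eq_ceilDiv_or_succ_eq_div_of_mem_compactRange hmax with hleft | hright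
    · exact Or.inl (congrArg (dyadicIco k) hleft)
    · exact Or.inr (congrArg (dyadicIco k) (Nat.eq_sub_of_add_eq hright))
  calc _ ≤ _ := Set.encard_le_encard hsub
    _ ≤ Set.encard {dyadicIco k (R / 2 ^ k - 1)} + 1 := Set.encard_insert_le _ _
    _ = 2 := by rw [Set.encard_singleton, one_add_one_eq_two]
end

section
/- For all natural numbers L ≤ R, every partition of the interval [L,R) into aligned dyadic intervals has at least as many parts as the compact range of [L,R); i.e., the compact range is a minimum-cardinality covering of [L,R) by disjoint aligned dyadic intervals. -/
/-!
Two dyadic intervals that meet are nested, so distinct maximal ones are disjoint. A member of the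
cover that meets a maximal interval `C` is nested with it, hence contained in `C`. Each maximal
interval thus contains a member of the cover, and members contained in disjoint intervals are
distinct.
-/

section Laminar

variable {α : Type*}

/-- A laminar family: any two members are nested or disjoint, so that its maximal members are
pairwise disjoint. Elements of an order with `⊥` are allowed in place of sets. -/
def IsLaminar [PartialOrder α] [OrderBot α] (F : Set α) : Prop :=
  ∀ ⦃a⦄, a ∈ F → ∀ ⦃b⦄, b ∈ F → ¬Disjoint a b → a ≤ b ∨ b ≤ a

theorem IsLaminar.mono [PartialOrder α] [OrderBot α] {F G : Set α} (hF : IsLaminar F)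
    (hGF : G ⊆ F) : IsLaminar G :=
  fun _ ha _ hb => hF (hGF ha) (hGF hb)

theorem IsLaminar.pairwiseDisjoint_maximal [PartialOrder α] [OrderBot α] {F : Set α}
    (hF : IsLaminar F) : {a | Maximal (· ∈ F) a}.PairwiseDisjoint id := by
  intro a ha b hb hne
  by_contra hab
  rcases hF ha.prop hb.prop hab with hle | hle
  · exact hne (ha.eq_of_le hb.prop hle)
  · exact hne (hb.eq_of_ge ha.prop hle)

theorem encard_le_encard_of_pairwiseDisjoint [PartialOrder α] [OrderBot α] {M P : Set α}
    (hM : M.PairwiseDisjoint id) (hMP : ∀ a ∈ M, ∃ p ∈ P, p ≠ ⊥ ∧ p ≤ a) :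
    M.encard ≤ P.encard := by
  choose! f hfP hf_ne_bot hf_le using hMP
  refine Set.encard_le_encard_of_injOn hfP fun a ha b hb hab => hM.elim ha hb fun hdisj => ?_
  exact hf_ne_bot a ha (le_bot_iff.mp (hdisj (hf_le a ha) (hab ▸ hf_le b hb)))

theorem IsLaminar.exists_mem_le_of_maximal [Order.Frame α] {F P : Set α} (hF : IsLaminar F)
    (hPF : P ⊆ F) {a : α} (ha : Maximal (· ∈ F) a) (ha_ne_bot : a ≠ ⊥) (haP : a ≤ sSup P) :
    ∃ p ∈ P, p ≤ a := by
  have hmeet : ∃ p ∈ P, ¬Disjoint a p := by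
    by_contra! hdisj
    exact ha_ne_bot ((disjoint_sSup_iff.mpr hdisj).eq_bot_of_le haP)
  obtain ⟨p, hp, hap⟩ := hmeet
  exact ⟨p, hp, (hF ha.prop (hPF hp) hap).elim (ha.le_of_ge (hPF hp)) id⟩

theorem IsLaminar.encard_maximal_le [Order.Frame α] {F P : Set α} (hF : IsLaminar F)
    (hbot : ⊥ ∉ F) (hPF : P ⊆ F) (hFP : ∀ a ∈ F, a ≤ sSup P) :
    {a | Maximal (· ∈ F) a}.encard ≤ P.encard := by
  refine encard_le_encard_of_pairwiseDisjoint hF.pairwiseDisjoint_maximal fun a ha => ?_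
  obtain ⟨p, hp, hpa⟩ :=
    hF.exists_mem_le_of_maximal hPF ha (ne_of_mem_of_not_mem ha.prop hbot) (hFP a ha.prop)
  exact ⟨p, hp, ne_of_mem_of_not_mem (hPF hp) hbot, hpa⟩

end Laminar

theorem IsDyadic.nonempty {I : Set ℕ} (hI : IsDyadic I) : I.Nonempty := by
  obtain ⟨a, k, rfl⟩ := hI
  exact Set.nonempty_Ico.mpr (Nat.mul_lt_mul_of_pos_right a.lt_succ_self (Nat.two_pow_pos k))

theorem mem_Ico_mul_iff_div_eq {m : ℕ} (hm : 0 < m) (a x : ℕ) :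
    x ∈ Set.Ico (a * m) ((a + 1) * m) ↔ x / m = a := by
  rw [Set.mem_Ico, ← Nat.le_div_iff_mul_le hm, ← Nat.div_lt_iff_lt_mul hm]
  omega

theorem IsDyadic.exists_forall_mem_iff_div_eq {I : Set ℕ} (hI : IsDyadic I) :
    ∃ k, ∀ x ∈ I, ∀ y, y ∈ I ↔ y / 2 ^ k = x / 2 ^ k := by
  obtain ⟨a, k, rfl⟩ := hI
  refine ⟨k, fun x hx y => ?_⟩
  rw [mem_Ico_mul_iff_div_eq (Nat.two_pow_pos k)] at hx ⊢
  rw [hx]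

theorem div_eq_div_of_dvd_of_div_eq {m n x y : ℕ} (hmn : m ∣ n) (h : x / m = y / m) :
    x / n = y / n := by
  obtain ⟨d, rfl⟩ := hmn
  rw [← Nat.div_div_eq_div_mul, h, Nat.div_div_eq_div_mul]

theorem isLaminar_isDyadic : IsLaminar {I | IsDyadic I} := by
  intro I hI J hJ hIJ
  obtain ⟨x, hxI, hxJ⟩ := Set.not_disjoint_iff.mp hIJ
  obtain ⟨k, hk⟩ := hI.exists_forall_mem_iff_div_eq
  obtain ⟨l, hl⟩ := hJ.exists_forall_mem_iff_div_eq
  rcases le_total k l with hkl | hlk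
  · exact .inl fun y hy =>
      (hl x hxJ y).mpr (div_eq_div_of_dvd_of_div_eq (pow_dvd_pow 2 hkl) ((hk x hxI y).mp hy))
  · exact .inr fun y hy =>
      (hk x hxI y).mpr (div_eq_div_of_dvd_of_div_eq (pow_dvd_pow 2 hlk) ((hl x hxJ y).mp hy))

theorem compactRange_eq_setOf_maximal (L R : ℕ) :
    CompactRange L R = {I | Maximal (· ∈ {J | IsDyadic J ∧ J ⊆ Set.Ico L R}) I} := by
  ext I
  simp only [CompactRange, Set.mem_ofPred_eq, maximal_iff, and_imp, and_assoc]

theorem compactRange_minimal_general (L R : ℕ) (P : Set (Set ℕ))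
    (hdyadic : ∀ I ∈ P, IsDyadic I) (hcover : ⋃₀ P = Set.Ico L R) :
    (CompactRange L R).encard ≤ P.encard := by
  rw [compactRange_eq_setOf_maximal]
  apply IsLaminar.encard_maximal_le
  · exact isLaminar_isDyadic.mono fun _ hI => hI.1
  · exact fun hempty => Set.not_nonempty_empty hempty.1.nonempty
  · exact fun I hI => ⟨hdyadic I hI, hcover ▸ Set.subset_sUnion_of_mem hI⟩
  · exact fun I hI => hI.2.trans_eq hcover.symm

/-- The compact range is a minimum-cardinality partition of `[L, R)` into
aligned dyadic intervals. -/
theorem compactRange_minimal (L R : ℕ) (h : L ≤ R) (P : Set (Set ℕ))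
    (hdyadic : ∀ I ∈ P, IsDyadic I) (hdisj : P.Pairwise Disjoint)
    (hcover : ⋃₀ P = Set.Ico L R) :
    (CompactRange L R).encard ≤ P.encard :=
  compactRange_minimal_general L R P hdyadic hcover
end
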